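/- For all s ∈ ℝ, the alternative moving frame satisfies the derivative formulas N′(s) = f(s)·C(s), C′(s) = −f(s)·N(s) + g(s)·W(s), and W′(s) = −g(s)·C(s). -/

import Mathlib

open RealInnerProductSpace

/-- Cross product on `EuclideanSpace ℝ (Fin 3)`. -/
noncomputable def cross3 (u v : EuclideanSpace ℝ (Fin 3)) : EuclideanSpace ℝ (Fin 3) :=
  (EuclideanSpace.equiv (Fin 3) ℝ).symm
    (crossProduct ((EuclideanSpace.equiv (Fin 3) ℝ) u) ((EuclideanSpace.equiv (Fin 3) ℝ) v))

/-- Determinant of the 3×3 matrix whose rows are the given vectors. -/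
noncomputable def det3 (u v w : EuclideanSpace ℝ (Fin 3)) : ℝ :=
  Matrix.det (Matrix.of ![(EuclideanSpace.equiv (Fin 3) ℝ) u,
    (EuclideanSpace.equiv (Fin 3) ℝ) v, (EuclideanSpace.equiv (Fin 3) ℝ) w])

/-!
The vectors `T` and `B` span the plane orthogonal to `N`, and `(C, W)` is an orthonormal frame of
that plane: `C = -cos θ • T + sin θ • B` and `W = sin θ • T + cos θ • B` with `θ = arctan (τ / κ)`.
By the Frenet equations `N' = -κ T + τ B` points along `C`. Since `T'` and `B'` are multiples of
`N`, the part of `C'` and `W'` in the plane comes only from the variation of `θ`, and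
`θ' = (τ / κ)' / (1 + (τ / κ) ^ 2)` is `g`.
-/

open Topology

section CrossProduct

variable (u v w : EuclideanSpace ℝ (Fin 3))

lemma cross3_add_left : cross3 (u + v) w = cross3 u w + cross3 v w := by
  simp [cross3]

lemma cross3_smul_left (c : ℝ) : cross3 (c • u) v = c • cross3 u v := by
  simp [cross3]

lemma cross3_add_right : cross3 u (v + w) = cross3 u v + cross3 u w := by
  simp [cross3]

lemma cross3_smul_right (c : ℝ) : cross3 u (c • v) = c • cross3 u v := by
  simp [cross3]

lemma cross3_self : cross3 u u = 0 := by
  simp [cross3]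

lemma inner_self_cross3 : ⟪u, cross3 u v⟫ = 0 := by
  rw [real_inner_comm]
  exact dot_self_cross u.ofLp v.ofLp

lemma inner_cross3_self : ⟪v, cross3 u v⟫ = 0 := by
  rw [real_inner_comm]
  exact dot_cross_self u.ofLp v.ofLp

lemma cross3_cross3_right : cross3 u (cross3 v w) = ⟪u, w⟫ • v - ⟪u, v⟫ • w := by
  rw [real_inner_comm]
  exact congrArg (WithLp.toLp 2) (cross_cross_eq_smul_sub_smul' u.ofLp v.ofLp w.ofLp)

variable {u v}

lemma norm_cross3_of_inner_eq_zero (h : ⟪u, v⟫ = 0) : ‖cross3 u v‖ = ‖u‖ * ‖v‖ := by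
  have hsin := InnerProductGeometry.norm_ofLp_crossProduct u v
  rwa [InnerProductGeometry.inner_eq_zero_iff_angle_eq_pi_div_two u v |>.1 h, Real.sin_pi_div_two,
    mul_one] at hsin

lemma orthonormal_cross3 (h : Orthonormal ℝ ![u, v]) : Orthonormal ℝ ![u, v, cross3 u v] := by
  obtain ⟨hu, huv, hv⟩ : ‖u‖ = 1 ∧ ⟪u, v⟫ = 0 ∧ ‖v‖ = 1 := by simpa using h
  have hnorm : ‖cross3 u v‖ = 1 := by rw [norm_cross3_of_inner_eq_zero huv, hu, hv, mul_one]
  simp [Fin.forall_fin_two, hu, hv, huv, hnorm, inner_self_cross3, inner_cross3_self]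

lemma hasDerivAt_cross3 {a b : ℝ → EuclideanSpace ℝ (Fin 3)} {a' b' : EuclideanSpace ℝ (Fin 3)}
    {s : ℝ} (ha : HasDerivAt a a' s) (hb : HasDerivAt b b' s) :
    HasDerivAt (fun t => cross3 (a t) (b t)) (cross3 (a s) b' + cross3 a' (b s)) s :=
  (LinearMap.toContinuousBilinearMap (LinearMap.mk₂ ℝ cross3 cross3_add_left
    (fun c u v => cross3_smul_left u v c) cross3_add_right
    fun c u v => cross3_smul_right u v c)).hasDerivAt_of_bilinear
      (u := a) (v := b) (fun _ => ha) (fun _ => hb)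

end CrossProduct

section InnerProduct

variable {E : Type*} [NormedAddCommGroup E] [InnerProductSpace ℝ E] {a b : ℝ → E} {a' b' : E}
  {s c : ℝ}

lemma sum_inner_smul_of_orthonormal_of_card_eq_finrank [FiniteDimensional ℝ E]
    {ι : Type*} [Fintype ι] {e : ι → E}
    (he : Orthonormal ℝ e) (hcard : Module.finrank ℝ E = Fintype.card ι) (v : E) :
    ∑ i, ⟪e i, v⟫ • e i = v := by
  obtain ⟨b, hb⟩ := Orthonormal.exists_orthonormalBasis_extension_of_card_eq (𝕜 := ℝ) hcard
    (v := e) (s := Set.univ) (he.comp _ Subtype.val_injective)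
  simpa only [hb _ (Set.mem_univ _)] using b.sum_repr' v

lemma inner_add_inner_eq_zero_of_eventually_inner_eq (ha : HasDerivAt a a' s)
    (hb : HasDerivAt b b' s) (h : ∀ᶠ t in 𝓝 s, ⟪a t, b t⟫ = c) :
    ⟪a s, b'⟫ + ⟪a', b s⟫ = 0 :=
  (ha.inner ℝ hb).unique ((hasDerivAt_const s c).congr_of_eventuallyEq h)

lemma inner_deriv_eq_zero_of_eventually_norm_eq (ha : HasDerivAt a a' s)
    (h : ∀ᶠ t in 𝓝 s, ‖a t‖ = c) : ⟪a s, a'⟫ = 0 := by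
  have hsq : ∀ᶠ t in 𝓝 s, ⟪a t, a t⟫ = c ^ 2 :=
    h.mono fun t ht => by rw [real_inner_self_eq_norm_sq, ht]
  have hsum := inner_add_inner_eq_zero_of_eventually_inner_eq ha ha hsq
  rw [real_inner_comm (a s) a'] at hsum
  linarith

end InnerProduct

section Smoothness

variable {E : Type*} [NormedAddCommGroup E] [NormedSpace ℝ E] {a : ℝ → E} {s : ℝ}

lemma differentiableAt_deriv_of_contDiffAt_two (ha : ContDiffAt ℝ 2 a s) :
    DifferentiableAt ℝ (deriv a) s :=
  (ha.derivWithin (m := 1) (by norm_num)).differentiableAt one_ne_zero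

lemma contDiffAt_deriv_deriv {n : WithTop ℕ∞} (ha : ContDiffAt ℝ (n + 2) a s) :
    ContDiffAt ℝ n (deriv (deriv a)) s :=
  (ha.derivWithin (m := n + 1) (by rw [add_assoc, one_add_one_eq_two])).derivWithin le_rfl

end Smoothness

section Angle

variable {x : ℝ}

lemma sqrt_one_add_div_sq (hx : 0 < x) (y : ℝ) : √(1 + (y / x) ^ 2) = √(x ^ 2 + y ^ 2) / x := by
  rw [div_pow, one_add_div (by positivity), Real.sqrt_div (by positivity), Real.sqrt_sq hx.le]

lemma cos_arctan_div (hx : 0 < x) (y : ℝ) :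
    Real.cos (Real.arctan (y / x)) = x / √(x ^ 2 + y ^ 2) := by
  rw [Real.cos_arctan, sqrt_one_add_div_sq hx, one_div_div]

lemma sin_arctan_div (hx : 0 < x) (y : ℝ) :
    Real.sin (Real.arctan (y / x)) = y / √(x ^ 2 + y ^ 2) := by
  rw [Real.sin_arctan, sqrt_one_add_div_sq hx, div_div_div_cancel_right₀ hx.ne']

end Angle

section AlternativeFrame

variable {E : Type*} [NormedAddCommGroup E] [NormedSpace ℝ E]

/-- The Frenet–Serret equations at the parameter `s`, for a frame `T`, `N`, `B` with curvature `κ`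
and torsion `τ`. Orthonormality of the frame is not part of the condition, so that it makes sense in
any normed space. -/
structure FrenetEquationsAt (T N B : ℝ → E) (κ τ : ℝ → ℝ) (s : ℝ) : Prop where
  tangent : HasDerivAt T (κ s • N s) s
  normal : HasDerivAt N ((-κ s) • T s + τ s • B s) s
  binormal : HasDerivAt B ((-τ s) • N s) s

/-- The vector `C` of the alternative moving frame: the normalized derivative of the principal
normal. -/
noncomputable def alternativeC (T B : ℝ → E) (κ τ : ℝ → ℝ) (s : ℝ) : E :=
  (√(κ s ^ 2 + τ s ^ 2))⁻¹ • ((-κ s) • T s + τ s • B s)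

/-- The vector `W` of the alternative moving frame: the normalized Darboux vector. -/
noncomputable def alternativeW (T B : ℝ → E) (κ τ : ℝ → ℝ) (s : ℝ) : E :=
  (√(κ s ^ 2 + τ s ^ 2))⁻¹ • (τ s • T s + κ s • B s)

/-- The first alternative curvature `f` of a curve with curvature `κ` and torsion `τ`. -/
noncomputable def alternativeCurvature (κ τ : ℝ → ℝ) (s : ℝ) : ℝ :=
  √(κ s ^ 2 + τ s ^ 2)

/-- The second alternative curvature `g` of a curve with curvature `κ` and torsion `τ`, which plays
the role of the torsion in the derivative formulas of the alternative frame. -/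
noncomputable def alternativeTorsion (κ τ : ℝ → ℝ) (s : ℝ) : ℝ :=
  κ s ^ 2 / (κ s ^ 2 + τ s ^ 2) * deriv (fun t => τ t / κ t) s

variable {T N B : ℝ → E} {κ τ : ℝ → ℝ} {s : ℝ}

lemma alternativeC_eq_cos_smul_add_sin_smul (T B : ℝ → E) (τ : ℝ → ℝ) (hκ : 0 < κ s) :
    alternativeC T B κ τ s =
      (-Real.cos (Real.arctan (τ s / κ s))) • T s + Real.sin (Real.arctan (τ s / κ s)) • B s := by
  rw [cos_arctan_div hκ, sin_arctan_div hκ, alternativeC]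
  module

lemma alternativeW_eq_sin_smul_add_cos_smul (T B : ℝ → E) (τ : ℝ → ℝ) (hκ : 0 < κ s) :
    alternativeW T B κ τ s =
      Real.sin (Real.arctan (τ s / κ s)) • T s + Real.cos (Real.arctan (τ s / κ s)) • B s := by
  rw [cos_arctan_div hκ, sin_arctan_div hκ, alternativeW]
  module

lemma hasDerivAt_arctan_div_alternativeTorsion (hκ : DifferentiableAt ℝ κ s)
    (hτ : DifferentiableAt ℝ τ s) (hκ0 : κ s ≠ 0) :
    HasDerivAt (fun t => Real.arctan (τ t / κ t)) (alternativeTorsion κ τ s) s := by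
  refine (hτ.fun_div hκ hκ0).hasDerivAt.arctan.congr_deriv ?_
  rw [alternativeTorsion]
  field_simp

namespace FrenetEquationsAt

lemma hasDerivAt_normal (h : FrenetEquationsAt T N B κ τ s) (hκ : κ s ≠ 0) :
    HasDerivAt N (alternativeCurvature κ τ s • alternativeC T B κ τ s) s := by
  have hsqrt : √(κ s ^ 2 + τ s ^ 2) ≠ 0 := by positivity
  rw [alternativeCurvature, alternativeC, smul_inv_smul₀ hsqrt]
  exact h.normal

lemma hasDerivAt_alternativeC (h : FrenetEquationsAt T N B κ τ s) (hκ : DifferentiableAt ℝ κ s)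
    (hτ : DifferentiableAt ℝ τ s) (hκ0 : 0 < κ s) :
    HasDerivAt (alternativeC T B κ τ)
      ((-alternativeCurvature κ τ s) • N s + alternativeTorsion κ τ s • alternativeW T B κ τ s)
      s := by
  have hθ := hasDerivAt_arctan_div_alternativeTorsion hκ hτ hκ0.ne'
  have hrot := (hθ.cos.fun_neg.fun_smul h.tangent).fun_add (hθ.sin.fun_smul h.binormal)
  have hC := hrot.congr_of_eventuallyEq <|
    (hκ.continuousAt.eventually_const_lt hκ0).mono fun t ht =>
      alternativeC_eq_cos_smul_add_sin_smul T B τ ht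
  have hf : alternativeCurvature κ τ s = Real.cos (Real.arctan (τ s / κ s)) * κ s +
      Real.sin (Real.arctan (τ s / κ s)) * τ s := by
    rw [cos_arctan_div hκ0, sin_arctan_div hκ0, alternativeCurvature, div_mul_eq_mul_div,
      div_mul_eq_mul_div, ← add_div, ← sq, ← sq, Real.div_sqrt]
  refine hC.congr_deriv ?_
  rw [alternativeW_eq_sin_smul_add_cos_smul T B τ hκ0, hf]
  module

lemma hasDerivAt_alternativeW (h : FrenetEquationsAt T N B κ τ s) (hκ : DifferentiableAt ℝ κ s)
    (hτ : DifferentiableAt ℝ τ s) (hκ0 : 0 < κ s) :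
    HasDerivAt (alternativeW T B κ τ) ((-alternativeTorsion κ τ s) • alternativeC T B κ τ s) s := by
  have hθ := hasDerivAt_arctan_div_alternativeTorsion hκ hτ hκ0.ne'
  have hrot := (hθ.sin.fun_smul h.tangent).fun_add (hθ.cos.fun_smul h.binormal)
  have hW := hrot.congr_of_eventuallyEq <|
    (hκ.continuousAt.eventually_const_lt hκ0).mono fun t ht =>
      alternativeW_eq_sin_smul_add_cos_smul T B τ ht
  have hN : Real.sin (Real.arctan (τ s / κ s)) * κ s =
      Real.cos (Real.arctan (τ s / κ s)) * τ s := by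
    rw [cos_arctan_div hκ0, sin_arctan_div hκ0]
    ring
  refine hW.congr_deriv ?_
  rw [alternativeC_eq_cos_smul_add_sin_smul T B τ hκ0]
  linear_combination (norm := module) hN • N s

end FrenetEquationsAt

end AlternativeFrame

section Curvature

/-- The curvature `‖α''‖` of a unit-speed curve `α`. -/
noncomputable def curvature {E : Type*} [NormedAddCommGroup E] [NormedSpace ℝ E] (α : ℝ → E)
    (s : ℝ) : ℝ :=
  ‖deriv (deriv α) s‖

/-- The principal normal `α'' / κ` of a unit-speed curve `α`; it is `0` where the curvature `κ`
vanishes. -/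
noncomputable def principalNormal {E : Type*} [NormedAddCommGroup E] [NormedSpace ℝ E] (α : ℝ → E)
    (s : ℝ) : E :=
  (curvature α s)⁻¹ • deriv (deriv α) s

variable {E : Type*} [NormedAddCommGroup E] [InnerProductSpace ℝ E] {α : ℝ → E} {s : ℝ}

lemma hasDerivAt_deriv_curvature_smul (hα : ContDiffAt ℝ 2 α s) :
    HasDerivAt (deriv α) (curvature α s • principalNormal α s) s := by
  refine (differentiableAt_deriv_of_contDiffAt_two hα).hasDerivAt.congr_deriv ?_
  obtain hκ | hκ := eq_or_ne (curvature α s) 0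
  · rw [hκ, zero_smul]
    exact norm_eq_zero.1 hκ
  · rw [principalNormal, smul_inv_smul₀ hκ]

lemma norm_principalNormal (hκ : curvature α s ≠ 0) : ‖principalNormal α s‖ = 1 := by
  rw [principalNormal, norm_smul, norm_inv, curvature, norm_norm]
  exact inv_mul_cancel₀ hκ

lemma inner_deriv_principalNormal (hα : ContDiffAt ℝ 2 α s)
    (hunit : ∀ᶠ t in 𝓝 s, ‖deriv α t‖ = 1) : ⟪deriv α s, principalNormal α s⟫ = 0 := by
  have hα'' := (differentiableAt_deriv_of_contDiffAt_two hα).hasDerivAt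
  rw [principalNormal, real_inner_smul_right,
    inner_deriv_eq_zero_of_eventually_norm_eq hα'' hunit, mul_zero]

lemma contDiffAt_curvature {n : WithTop ℕ∞} (hα : ContDiffAt ℝ (n + 2) α s)
    (hκ : curvature α s ≠ 0) : ContDiffAt ℝ n (curvature α) s :=
  (contDiffAt_deriv_deriv hα).norm ℝ (norm_ne_zero_iff.1 hκ)

lemma contDiffAt_principalNormal {n : WithTop ℕ∞} (hα : ContDiffAt ℝ (n + 2) α s)
    (hκ : curvature α s ≠ 0) : ContDiffAt ℝ n (principalNormal α) s :=
  ((contDiffAt_curvature hα hκ).inv hκ).smul (contDiffAt_deriv_deriv hα)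

end Curvature

section FrenetFrame

/-- The binormal `T × N` of a unit-speed curve `α` in `ℝ³`. -/
noncomputable def binormal (α : ℝ → EuclideanSpace ℝ (Fin 3)) (s : ℝ) :
    EuclideanSpace ℝ (Fin 3) :=
  cross3 (deriv α s) (principalNormal α s)

/-- The torsion `⟪N', B⟫` of a unit-speed curve `α` in `ℝ³`. -/
noncomputable def torsion (α : ℝ → EuclideanSpace ℝ (Fin 3)) (s : ℝ) : ℝ :=
  ⟪deriv (principalNormal α) s, binormal α s⟫

variable {α : ℝ → EuclideanSpace ℝ (Fin 3)} {s : ℝ}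

lemma orthonormal_deriv_principalNormal (hα : ContDiffAt ℝ 2 α s)
    (hunit : ∀ᶠ t in 𝓝 s, ‖deriv α t‖ = 1) (hκ : curvature α s ≠ 0) :
    Orthonormal ℝ ![deriv α s, principalNormal α s] := by
  simp [hunit.self_of_nhds, norm_principalNormal hκ, inner_deriv_principalNormal hα hunit]

theorem hasDerivAt_principalNormal (hα : ContDiffAt ℝ 3 α s)
    (hunit : ∀ᶠ t in 𝓝 s, ‖deriv α t‖ = 1) (hκ : curvature α s ≠ 0) :
    HasDerivAt (principalNormal α) ((-curvature α s) • deriv α s + torsion α s • binormal α s)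
      s := by
  have hα₂ : ContDiffAt ℝ 2 α s := hα.of_le (by norm_num)
  have hN := ((contDiffAt_principalNormal (n := 1) hα hκ).differentiableAt one_ne_zero).hasDerivAt
  have hκ_near : ∀ᶠ t in 𝓝 s, curvature α t ≠ 0 :=
    (contDiffAt_curvature (n := 1) hα hκ).continuousAt.eventually_ne hκ
  have hNN' : ⟪principalNormal α s, deriv (principalNormal α) s⟫ = 0 :=
    inner_deriv_eq_zero_of_eventually_norm_eq hN (hκ_near.mono fun t => norm_principalNormal)
  have hTN_near : ∀ᶠ t in 𝓝 s, ⟪deriv α t, principalNormal α t⟫ = 0 :=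
    (hα₂.eventually (by simp)).mp <| hunit.eventually_nhds.mono fun t ht hαt =>
      inner_deriv_principalNormal hαt ht
  have hTN' : ⟪deriv α s, deriv (principalNormal α) s⟫ = -curvature α s := by
    have hsum := inner_add_inner_eq_zero_of_eventually_inner_eq
      (hasDerivAt_deriv_curvature_smul hα₂) hN hTN_near
    rw [real_inner_smul_left, real_inner_self_eq_norm_sq, norm_principalNormal hκ] at hsum
    linarith
  have hexpand := sum_inner_smul_of_orthonormal_of_card_eq_finrank
    (orthonormal_cross3 (orthonormal_deriv_principalNormal hα₂ hunit hκ)) (by simp)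
    (deriv (principalNormal α) s)
  simp only [Fin.sum_univ_three, Matrix.cons_val, hTN', hNN', zero_smul, add_zero] at hexpand
  rw [real_inner_comm] at hexpand
  exact hN.congr_deriv hexpand.symm

theorem hasDerivAt_binormal (hα : ContDiffAt ℝ 3 α s)
    (hunit : ∀ᶠ t in 𝓝 s, ‖deriv α t‖ = 1) (hκ : curvature α s ≠ 0) :
    HasDerivAt (binormal α) ((-torsion α s) • principalNormal α s) s := by
  have hα₂ : ContDiffAt ℝ 2 α s := hα.of_le (by norm_num)
  have hTT : ⟪deriv α s, deriv α s⟫ = 1 := by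
    rw [real_inner_self_eq_norm_sq, hunit.self_of_nhds, one_pow]
  have hTB : cross3 (deriv α s) (binormal α s) = -principalNormal α s := by
    rw [binormal, cross3_cross3_right, inner_deriv_principalNormal hα₂ hunit, hTT]
    module
  refine (hasDerivAt_cross3 (hasDerivAt_deriv_curvature_smul hα₂)
    (hasDerivAt_principalNormal hα hunit hκ)).congr_deriv ?_
  rw [cross3_add_right, cross3_smul_right, cross3_smul_right, cross3_smul_left, cross3_self,
    cross3_self, hTB]
  module

theorem frenetEquationsAt_of_curvature_ne_zero (hα : ContDiffAt ℝ 3 α s)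
    (hunit : ∀ᶠ t in 𝓝 s, ‖deriv α t‖ = 1) (hκ : curvature α s ≠ 0) :
    FrenetEquationsAt (deriv α) (principalNormal α) (binormal α) (curvature α) (torsion α) s where
  tangent := hasDerivAt_deriv_curvature_smul (hα.of_le (by norm_num))
  normal := hasDerivAt_principalNormal hα hunit hκ
  binormal := hasDerivAt_binormal hα hunit hκ

lemma differentiableAt_torsion (hα : ContDiffAt ℝ 4 α s) (hκ : curvature α s ≠ 0) :
    DifferentiableAt ℝ (torsion α) s := by
  have hN : ContDiffAt ℝ 2 (principalNormal α) s :=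
    contDiffAt_principalNormal (hα.of_le (by norm_num)) hκ
  have hN' : DifferentiableAt ℝ (deriv (principalNormal α)) s :=
    differentiableAt_deriv_of_contDiffAt_two hN
  have hB : DifferentiableAt ℝ (binormal α) s :=
    (hasDerivAt_cross3 (hasDerivAt_deriv_curvature_smul (hα.of_le (by norm_num)))
      (hN.differentiableAt two_ne_zero).hasDerivAt).differentiableAt
  exact hN'.inner ℝ hB

end FrenetFrame

theorem stmt_0_general {α : ℝ → EuclideanSpace ℝ (Fin 3)} {s : ℝ} (hα : ContDiffAt ℝ 4 α s)
    (hunit : ∀ᶠ t in 𝓝 s, ‖deriv α t‖ = 1) (hκ : 0 < curvature α s) :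
    let C := alternativeC (deriv α) (binormal α) (curvature α) (torsion α)
    let W := alternativeW (deriv α) (binormal α) (curvature α) (torsion α)
    let f := alternativeCurvature (curvature α) (torsion α)
    let g := alternativeTorsion (curvature α) (torsion α)
    HasDerivAt (principalNormal α) (f s • C s) s ∧
      HasDerivAt C ((-f s) • principalNormal α s + g s • W s) s ∧
      HasDerivAt W ((-g s) • C s) s := by
  have hfrenet := frenetEquationsAt_of_curvature_ne_zero (hα.of_le (by norm_num)) hunit hκ.ne'
  have hκ' : DifferentiableAt ℝ (curvature α) s :=
    (contDiffAt_curvature (n := 2) (hα.of_le (by norm_num)) hκ.ne').differentiableAt two_ne_zero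
  have hτ' := differentiableAt_torsion hα hκ.ne'
  exact ⟨hfrenet.hasDerivAt_normal hκ.ne', hfrenet.hasDerivAt_alternativeC hκ' hτ' hκ,
    hfrenet.hasDerivAt_alternativeW hκ' hτ' hκ⟩

theorem stmt_0
    (α : ℝ → EuclideanSpace ℝ (Fin 3))
    (hα : ContDiff ℝ (⊤ : ℕ∞) α)
    (hunit : ∀ s, ‖deriv α s‖ = 1)
    (T : ℝ → EuclideanSpace ℝ (Fin 3)) (hT : ∀ s, T s = deriv α s)
    (κ : ℝ → ℝ) (hκ : ∀ s, κ s = ‖deriv (deriv α) s‖) (hκpos : ∀ s, 0 < κ s)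
    (N : ℝ → EuclideanSpace ℝ (Fin 3)) (hN : ∀ s, N s = (κ s)⁻¹ • deriv (deriv α) s)
    (B : ℝ → EuclideanSpace ℝ (Fin 3)) (hB : ∀ s, B s = cross3 (T s) (N s))
    (τ : ℝ → ℝ) (hτ : ∀ s, τ s = ⟪deriv N s, B s⟫)
    (f : ℝ → ℝ) (hf : ∀ s, f s = Real.sqrt (κ s ^ 2 + τ s ^ 2))
    (g : ℝ → ℝ) (hg : ∀ s, g s = κ s ^ 2 / (κ s ^ 2 + τ s ^ 2) * deriv (fun u => τ u / κ u) s)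
    (C : ℝ → EuclideanSpace ℝ (Fin 3))
    (hC : ∀ s, C s = (Real.sqrt (κ s ^ 2 + τ s ^ 2))⁻¹ • ((-κ s) • T s + τ s • B s))
    (W : ℝ → EuclideanSpace ℝ (Fin 3))
    (hW : ∀ s, W s = (Real.sqrt (κ s ^ 2 + τ s ^ 2))⁻¹ • (τ s • T s + κ s • B s)) :
    ∀ s : ℝ,
      deriv N s = f s • C s ∧
      deriv C s = (-f s) • N s + g s • W s ∧
      deriv W s = (-g s) • C s := by
  rw [funext hW, funext hC, funext hg, funext hf, funext hτ, funext hB, funext hN, funext hκ,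
    funext hT]
  intro s
  have hκs : 0 < curvature α s := (hκpos s).trans_eq (hκ s)
  obtain ⟨hN', hC', hW'⟩ :=
    stmt_0_general (contDiff_infty.1 hα 4).contDiffAt (.of_forall hunit) hκs
  exact ⟨hN'.deriv, hC'.deriv, hW'.deriv⟩
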